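/- Let μ be a probability measure on ℝ whose cumulative distribution function F(x) = μ((−∞, x]) is continuous, let G be the cumulative distribution function of μ ∗ μ, and define F⁻¹(t) := inf{x ∈ ℝ : F(x) ≥ t}, G⁻¹(v) := inf{x ∈ ℝ : G(x) ≥ v}, and k_v(t) := F(G⁻¹(v) − F⁻¹(t)) for v, t ∈ (0,1). Then: (a) for every v, the map t ↦ k_v(t) is decreasing; (b) for every t, the map v ↦ k_v(t) is increasing; and (c) for every v ∈ (0,1) and every u ∈ [0,1], ∫₀¹ min(k_v(t), u) dt = ∫₀ᵘ k_v(t) dt. Consequently, C(v,u) := ∫₀ᵘ k_v(t) dt defines a stochastically increasing bivariate copula that is a fixed point of the upper product transform: T(C) = C. -/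

import Mathlib

open MeasureTheory Set

noncomputable section

/-- A bivariate copula: a function `[0,1]² → [0,1]` (encoded on `ℝ × ℝ`, with all
conditions imposed on `[0,1]²`) with the copula boundary conditions and the
2-increasing property. -/
def IsCopula (C : ℝ → ℝ → ℝ) : Prop :=
  (∀ v ∈ Icc (0:ℝ) 1, ∀ u ∈ Icc (0:ℝ) 1, C v u ∈ Icc (0:ℝ) 1) ∧
  (∀ v ∈ Icc (0:ℝ) 1, C v 0 = 0) ∧
  (∀ u ∈ Icc (0:ℝ) 1, C 0 u = 0) ∧
  (∀ v ∈ Icc (0:ℝ) 1, C v 1 = v) ∧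
  (∀ u ∈ Icc (0:ℝ) 1, C 1 u = u) ∧
  (∀ v₁ v₂ u₁ u₂ : ℝ, 0 ≤ v₁ → v₁ ≤ v₂ → v₂ ≤ 1 → 0 ≤ u₁ → u₁ ≤ u₂ → u₂ ≤ 1 →
    0 ≤ C v₂ u₂ - C v₁ u₂ - C v₂ u₁ + C v₁ u₁)

/-- A derivative family `(h_v)_{v ∈ [0,1]}` for a copula `C`:
each `h_v : [0,1] → [0,1]` is Lebesgue measurable, `C(v,u) = ∫₀ᵘ h_v(t) dt`,
`v ↦ h_v(t)` is increasing, and `∫₀¹ h_v(t) dt = v`. -/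
def IsDerivFamily (C : ℝ → ℝ → ℝ) (h : ℝ → ℝ → ℝ) : Prop :=
  (∀ v ∈ Icc (0:ℝ) 1, Measurable (h v)) ∧
  (∀ v ∈ Icc (0:ℝ) 1, ∀ t ∈ Icc (0:ℝ) 1, h v t ∈ Icc (0:ℝ) 1) ∧
  (∀ v ∈ Icc (0:ℝ) 1, ∀ u ∈ Icc (0:ℝ) 1, C v u = ∫ t in (0:ℝ)..u, h v t) ∧
  (∀ t ∈ Icc (0:ℝ) 1, MonotoneOn (fun v => h v t) (Icc (0:ℝ) 1)) ∧
  (∀ v ∈ Icc (0:ℝ) 1, (∫ t in (0:ℝ)..1, h v t) = v)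

/-- The cumulative distribution function of a measure on `ℝ`. -/
def cdfOf (μ : Measure ℝ) (x : ℝ) : ℝ := (μ (Iic x)).toReal

/-- The convolution `μ ∗ μ`: the law of the sum of two independent random
variables each distributed according to `μ`. -/
def convSelf (μ : Measure ℝ) : Measure ℝ :=
  Measure.map (fun p : ℝ × ℝ => p.1 + p.2) (μ.prod μ)

/-- The quantile function `F⁻¹(t) = inf {x : F x ≥ t}` of a distribution
function `F`. -/
def quantile (F : ℝ → ℝ) (t : ℝ) : ℝ := sInf {x : ℝ | t ≤ F x}

/-- `k_v(t) = F(G⁻¹(v) − F⁻¹(t))`, where `F` is the cdf of `μ` and `G` the cdf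
of `μ ∗ μ`. -/
def kConv (μ : Measure ℝ) (v t : ℝ) : ℝ :=
  cdfOf μ (quantile (cdfOf (convSelf μ)) v - quantile (cdfOf μ) t)

/-- The derivative family `k_v`, extended to the boundary parameters `v = 0`
(by `0`) and `v = 1` (by `1`). -/
def kConvBar (μ : Measure ℝ) (v t : ℝ) : ℝ :=
  if v ≤ 0 then 0 else if 1 ≤ v then 1 else kConv μ v t

lemma cdfOf_eq (μ : Measure ℝ) [IsProbabilityMeasure μ] : cdfOf μ = ProbabilityTheory.cdf μ := by
  ext x; rw [ProbabilityTheory.cdf_eq_real]; rfl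

/-- Galois connection between quantile function and a continuous cdf. -/
lemma quantile_le_iff (μ : Measure ℝ) [IsProbabilityMeasure μ] (hF : Continuous (cdfOf μ))
    {t : ℝ} (ht : t ∈ Ioo (0:ℝ) 1) (x : ℝ) : quantile (cdfOf μ) t ≤ x ↔ t ≤ cdfOf μ x := by
  have hm : Monotone (cdfOf μ) := by rw [cdfOf_eq]; exact ProbabilityTheory.monotone_cdf μ
  have h0 : Filter.Tendsto (cdfOf μ) Filter.atBot (nhds 0) := by
    rw [cdfOf_eq]; exact ProbabilityTheory.tendsto_cdf_atBot μ
  have h1 : Filter.Tendsto (cdfOf μ) Filter.atTop (nhds 1) := by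
    rw [cdfOf_eq]; exact ProbabilityTheory.tendsto_cdf_atTop μ
  obtain ⟨a, ha⟩ := (h0.eventually (gt_mem_nhds ht.1)).exists
  obtain ⟨b, hb⟩ := (h1.eventually (lt_mem_nhds ht.2)).exists
  have hbdd : BddBelow {x : ℝ | t ≤ cdfOf μ x} := by
    refine ⟨a, fun y hy => ?_⟩
    by_contra hc
    exact absurd (lt_of_le_of_lt (hm (not_le.1 hc).le) ha) (not_lt.2 hy)
  have hcl : IsClosed {x : ℝ | t ≤ cdfOf μ x} := isClosed_le continuous_const hF
  have hmem : quantile (cdfOf μ) t ∈ {x : ℝ | t ≤ cdfOf μ x} :=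
    hcl.csInf_mem ⟨b, hb.le⟩ hbdd
  constructor
  · intro h
    exact le_trans hmem (hm h)
  · intro h
    exact csInf_le hbdd h

lemma cdf_quantile (μ : Measure ℝ) [IsProbabilityMeasure μ] (hF : Continuous (cdfOf μ))
    {t : ℝ} (ht : t ∈ Ioo (0:ℝ) 1) : cdfOf μ (quantile (cdfOf μ) t) = t := by
  have hm : Monotone (cdfOf μ) := by rw [cdfOf_eq]; exact ProbabilityTheory.monotone_cdf μ
  have h0 : Filter.Tendsto (cdfOf μ) Filter.atBot (nhds 0) := by
    rw [cdfOf_eq]; exact ProbabilityTheory.tendsto_cdf_atBot μ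
  have h1 : Filter.Tendsto (cdfOf μ) Filter.atTop (nhds 1) := by
    rw [cdfOf_eq]; exact ProbabilityTheory.tendsto_cdf_atTop μ
  obtain ⟨a, ha⟩ := (h0.eventually (gt_mem_nhds ht.1)).exists
  obtain ⟨b, hb⟩ := (h1.eventually (lt_mem_nhds ht.2)).exists
  obtain ⟨x, hx⟩ := mem_range_of_exists_le_of_exists_ge hF ⟨a, ha.le⟩ ⟨b, hb.le⟩
  apply le_antisymm
  · have := (quantile_le_iff μ hF ht x).2 hx.ge
    exact (hm this).trans hx.le
  · exact (quantile_le_iff μ hF ht _).1 le_rfl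

lemma quantile_mono (μ : Measure ℝ) [IsProbabilityMeasure μ] (hF : Continuous (cdfOf μ)) :
    MonotoneOn (quantile (cdfOf μ)) (Ioo (0:ℝ) 1) := by
  intro s hs t ht hst
  rw [quantile_le_iff μ hF hs, cdf_quantile μ hF ht]
  exact hst

lemma map_quantile (μ : Measure ℝ) [IsProbabilityMeasure μ] (hF : Continuous (cdfOf μ)) :
    Measure.map (quantile (cdfOf μ)) (volume.restrict (Ioo (0:ℝ) 1)) = μ := by
  have hq : AEMeasurable (quantile (cdfOf μ)) (volume.restrict (Ioo (0:ℝ) 1)) :=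
    aemeasurable_restrict_of_monotoneOn measurableSet_Ioo (quantile_mono μ hF)
  have : IsFiniteMeasure (Measure.map (quantile (cdfOf μ)) (volume.restrict (Ioo (0:ℝ) 1))) :=
    inferInstance
  apply Measure.ext_of_Iic
  intro x
  rw [Measure.map_apply_of_aemeasurable hq measurableSet_Iic]
  have hset : (quantile (cdfOf μ) ⁻¹' Iic x : Set ℝ) =ᵐ[volume.restrict (Ioo (0:ℝ) 1)]
      Iic (cdfOf μ x) := by
    filter_upwards [ae_restrict_mem measurableSet_Ioo] with t ht
    exact propext (quantile_le_iff μ hF ht x)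
  rw [measure_congr hset, restrict_Ioo_eq_restrict_Ioc, Measure.restrict_apply measurableSet_Iic,
    inter_comm, Ioc_inter_Iic, Real.volume_Ioc]
  have hle : cdfOf μ x ≤ 1 := by rw [cdfOf_eq]; exact ProbabilityTheory.cdf_le_one μ x
  rw [inf_eq_right.2 hle, sub_zero, cdfOf, ENNReal.ofReal_toReal (measure_ne_top _ _)]

instance convSelf_prob (μ : Measure ℝ) [IsProbabilityMeasure μ] :
    IsProbabilityMeasure (convSelf μ) :=
  Measure.isProbabilityMeasure_map (by fun_prop)

lemma cdfOf_nonneg (μ : Measure ℝ) (x : ℝ) : 0 ≤ cdfOf μ x := ENNReal.toReal_nonneg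

lemma cdfOf_le_one (μ : Measure ℝ) [IsProbabilityMeasure μ] (x : ℝ) : cdfOf μ x ≤ 1 := by
  rw [cdfOf_eq]; exact ProbabilityTheory.cdf_le_one μ x

lemma cdfOf_mono (μ : Measure ℝ) [IsProbabilityMeasure μ] : Monotone (cdfOf μ) := by
  rw [cdfOf_eq]; exact ProbabilityTheory.monotone_cdf μ

lemma cdf_conv (μ : Measure ℝ) [IsProbabilityMeasure μ] (z : ℝ) :
    cdfOf (convSelf μ) z = ∫ x, cdfOf μ (z - x) ∂μ := by
  have hmeas : Measurable (fun x => cdfOf μ (z - x)) :=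
    (cdfOf_mono μ).measurable.comp (by fun_prop)
  rw [integral_eq_lintegral_of_nonneg_ae (Filter.Eventually.of_forall fun x => cdfOf_nonneg μ _)
    hmeas.aestronglyMeasurable]
  unfold cdfOf convSelf
  congr 1
  rw [Measure.map_apply (by fun_prop) measurableSet_Iic,
    Measure.prod_apply ((by fun_prop : Measurable fun p : ℝ × ℝ => p.1 + p.2) measurableSet_Iic)]
  refine lintegral_congr fun x => ?_
  rw [ENNReal.ofReal_toReal (measure_ne_top _ _)]
  congr 1
  ext y
  simp [le_sub_iff_add_le']

lemma cdf_conv_continuous (μ : Measure ℝ) [IsProbabilityMeasure μ] (hF : Continuous (cdfOf μ)) :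
    Continuous (cdfOf (convSelf μ)) := by
  have : cdfOf (convSelf μ) = fun z => ∫ x, cdfOf μ (z - x) ∂μ := funext (cdf_conv μ)
  rw [this]
  refine continuous_of_dominated (bound := fun _ => 1) (fun z => ?_) (fun z => ?_)
    (integrable_const _) ?_
  · exact (hF.comp (by fun_prop)).aestronglyMeasurable
  · refine Filter.Eventually.of_forall fun x => ?_
    rw [Real.norm_of_nonneg (cdfOf_nonneg μ _)]
    exact cdfOf_le_one μ _
  · exact Filter.Eventually.of_forall fun x => hF.comp (by fun_prop)

lemma integral_kConv (μ : Measure ℝ) [IsProbabilityMeasure μ] (hF : Continuous (cdfOf μ))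
    {v : ℝ} (hv : v ∈ Ioo (0:ℝ) 1) : (∫ t in (0:ℝ)..1, kConv μ v t) = v := by
  rw [intervalIntegral.integral_of_le zero_le_one, ← restrict_Ioo_eq_restrict_Ioc]
  have hq : AEMeasurable (quantile (cdfOf μ)) (volume.restrict (Ioo (0:ℝ) 1)) :=
    aemeasurable_restrict_of_monotoneOn measurableSet_Ioo (quantile_mono μ hF)
  have hc : Continuous fun x => cdfOf μ (quantile (cdfOf (convSelf μ)) v - x) :=
    hF.comp (by fun_prop)
  have := integral_map hq (f := fun x => cdfOf μ (quantile (cdfOf (convSelf μ)) v - x))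
    hc.aestronglyMeasurable
  unfold kConv
  rw [← this, map_quantile μ hF, ← cdf_conv,
    cdf_quantile (convSelf μ) (cdf_conv_continuous μ hF) hv]

/-- The core: a self-inverse (symmetric) decreasing function is fixed by the transform. -/
lemma symm_fixed (h : ℝ → ℝ) (hanti : AntitoneOn h (Ioo (0:ℝ) 1))
    (h0 : ∀ t, 0 ≤ h t) (h1 : ∀ t, h t ≤ 1)
    (hs : ∀ s ∈ Ioo (0:ℝ) 1, ∀ t ∈ Ioo (0:ℝ) 1, (s ≤ h t ↔ t ≤ h s))
    {u : ℝ} (hu : u ∈ Icc (0:ℝ) 1) :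
    (∫ t in (0:ℝ)..1, min (h t) u) = ∫ t in (0:ℝ)..u, h t := by
  have hm1 : AEMeasurable h (volume.restrict (Ioo (0:ℝ) 1)) :=
    aemeasurable_restrict_of_antitoneOn measurableSet_Ioo hanti
  have hsub : Ioo 0 u ⊆ Ioo (0:ℝ) 1 := Ioo_subset_Ioo_right hu.2
  have hmu : AEMeasurable h (volume.restrict (Ioo (0:ℝ) u)) := hm1.mono_set hsub
  rw [intervalIntegral.integral_of_le zero_le_one, intervalIntegral.integral_of_le hu.1,
    ← restrict_Ioo_eq_restrict_Ioc, ← restrict_Ioo_eq_restrict_Ioc,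
    integral_eq_lintegral_of_nonneg_ae
      (Filter.Eventually.of_forall fun t => le_min (h0 t) hu.1)
      (hm1.min aemeasurable_const).aestronglyMeasurable,
    integral_eq_lintegral_of_nonneg_ae (Filter.Eventually.of_forall h0)
      hmu.aestronglyMeasurable]
  congr 1
  have key : ∀ a w : ℝ, ∫⁻ s in Ioo 0 w, (Iic a).indicator (fun _ => (1:ENNReal)) s
      = ENNReal.ofReal (min a w) := by
    intro a w
    rw [lintegral_indicator_const measurableSet_Iic, one_mul, restrict_Ioo_eq_restrict_Ioc,
      Measure.restrict_apply measurableSet_Iic, inter_comm, Ioc_inter_Iic, Real.volume_Ioc,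
      sub_zero, min_comm]
  calc ∫⁻ t in Ioo 0 1, ENNReal.ofReal (min (h t) u)
      = ∫⁻ t in Ioo 0 1, ∫⁻ s in Ioo 0 u, (Iic (h t)).indicator (fun _ => (1:ENNReal)) s := by
        simp_rw [key]
    _ = ∫⁻ s in Ioo 0 u, ∫⁻ t in Ioo 0 1, (Iic (h t)).indicator (fun _ => (1:ENNReal)) s := by
        apply lintegral_lintegral_swap
        have hnull : NullMeasurableSet {p : ℝ × ℝ | p.2 ≤ h p.1}
            ((volume.restrict (Ioo (0:ℝ) 1)).prod (volume.restrict (Ioo (0:ℝ) u))) :=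
          nullMeasurableSet_le measurable_snd.aemeasurable hm1.comp_fst
        have := (aemeasurable_const (b := (1:ENNReal))).indicator₀ hnull
        exact this
    _ = ∫⁻ s in Ioo 0 u, ∫⁻ t in Ioo 0 1, (Iic (h s)).indicator (fun _ => (1:ENNReal)) t := by
        refine setLIntegral_congr_fun measurableSet_Ioo fun s hsu => ?_
        refine setLIntegral_congr_fun measurableSet_Ioo fun t ht => ?_
        simp only [indicator, mem_Iic, hs s (hsub hsu) t ht]
    _ = ∫⁻ s in Ioo 0 u, ENNReal.ofReal (h s) := by
        simp_rw [key]
        refine lintegral_congr fun s => ?_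
        rw [min_eq_left (h1 s)]

lemma kConv_anti (μ : Measure ℝ) [IsProbabilityMeasure μ] (hF : Continuous (cdfOf μ)) (v : ℝ) :
    AntitoneOn (fun t => kConv μ v t) (Ioo (0:ℝ) 1) := by
  intro s hs t ht hst
  exact cdfOf_mono μ (sub_le_sub_left (quantile_mono μ hF hs ht hst) _)

lemma kConv_mono (μ : Measure ℝ) [IsProbabilityMeasure μ] (hF : Continuous (cdfOf μ)) (t : ℝ) :
    MonotoneOn (fun v => kConv μ v t) (Ioo (0:ℝ) 1) := by
  intro s hs v hv hsv
  exact cdfOf_mono μ (sub_le_sub_right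
    (quantile_mono (convSelf μ) (cdf_conv_continuous μ hF) hs hv hsv) _)

lemma kConv_symm (μ : Measure ℝ) [IsProbabilityMeasure μ] (hF : Continuous (cdfOf μ)) (v : ℝ) :
    ∀ s ∈ Ioo (0:ℝ) 1, ∀ t ∈ Ioo (0:ℝ) 1, (s ≤ kConv μ v t ↔ t ≤ kConv μ v s) := by
  intro s hs t ht
  unfold kConv
  rw [← quantile_le_iff μ hF hs, ← quantile_le_iff μ hF ht]
  constructor <;> intro h <;> linarith

lemma bar_zero (μ : Measure ℝ) {v : ℝ} (hv : v ≤ 0) : kConvBar μ v = fun _ => 0 := by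
  ext t; simp [kConvBar, hv]

lemma bar_one (μ : Measure ℝ) {v : ℝ} (hv : 1 ≤ v) : kConvBar μ v = fun _ => 1 := by
  ext t; simp [kConvBar, hv, not_le.2 (lt_of_lt_of_le zero_lt_one hv)]

lemma bar_mid (μ : Measure ℝ) {v : ℝ} (hv : v ∈ Ioo (0:ℝ) 1) : kConvBar μ v = kConv μ v := by
  ext t; simp [kConvBar, not_le.2 hv.1, not_le.2 hv.2]

lemma bar_cases (v : ℝ) : v ≤ 0 ∨ 1 ≤ v ∨ v ∈ Ioo (0:ℝ) 1 := by
  rcases le_or_gt v 0 with h | h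
  · exact Or.inl h
  · rcases le_or_gt 1 v with h' | h'
    · exact Or.inr (Or.inl h')
    · exact Or.inr (Or.inr ⟨h, h'⟩)

lemma bar_nonneg (μ : Measure ℝ) (v t : ℝ) : 0 ≤ kConvBar μ v t := by
  rcases bar_cases v with h | h | h
  · simp [bar_zero μ h]
  · simp [bar_one μ h]
  · rw [bar_mid μ h]; exact cdfOf_nonneg μ _

lemma bar_le_one (μ : Measure ℝ) [IsProbabilityMeasure μ] (v t : ℝ) : kConvBar μ v t ≤ 1 := by
  rcases bar_cases v with h | h | h
  · simp [bar_zero μ h]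
  · simp [bar_one μ h]
  · rw [bar_mid μ h]; exact cdfOf_le_one μ _

lemma bar_anti (μ : Measure ℝ) [IsProbabilityMeasure μ] (hF : Continuous (cdfOf μ)) (v : ℝ) :
    AntitoneOn (kConvBar μ v) (Ioo (0:ℝ) 1) := by
  rcases bar_cases v with h | h | h
  · rw [bar_zero μ h]; exact antitoneOn_const
  · rw [bar_one μ h]; exact antitoneOn_const
  · rw [bar_mid μ h]; exact kConv_anti μ hF v

lemma bar_symm (μ : Measure ℝ) [IsProbabilityMeasure μ] (hF : Continuous (cdfOf μ)) (v : ℝ) :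
    ∀ s ∈ Ioo (0:ℝ) 1, ∀ t ∈ Ioo (0:ℝ) 1, (s ≤ kConvBar μ v t ↔ t ≤ kConvBar μ v s) := by
  intro s hs t ht
  rcases bar_cases v with h | h | h
  · simp only [bar_zero μ h, not_le.2 hs.1, not_le.2 ht.1]
  · simp only [bar_one μ h, hs.2.le, ht.2.le]
  · rw [bar_mid μ h]; exact kConv_symm μ hF v s hs t ht

lemma bar_mono (μ : Measure ℝ) [IsProbabilityMeasure μ] (hF : Continuous (cdfOf μ)) (t : ℝ) :
    Monotone (fun v => kConvBar μ v t) := by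
  intro v w hvw
  show kConvBar μ v t ≤ kConvBar μ w t
  rcases bar_cases v with h | h | h
  · rw [bar_zero μ h]; exact bar_nonneg μ w t
  · rw [bar_one μ (h.trans hvw)]; exact bar_le_one μ v t
  · rcases bar_cases w with h' | h' | h'
    · exact absurd (h.1.trans_le hvw) (not_lt.2 h')
    · rw [bar_one μ h']; exact bar_le_one μ v t
    · rw [bar_mid μ h, bar_mid μ h']; exact kConv_mono μ hF t h h' hvw

lemma bar_integrable (μ : Measure ℝ) [IsProbabilityMeasure μ] (hF : Continuous (cdfOf μ)) (v : ℝ) :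
    IntegrableOn (kConvBar μ v) (Icc (0:ℝ) 1) := by
  rw [integrableOn_Icc_iff_integrableOn_Ioo]
  have hm : AEMeasurable (kConvBar μ v) (volume.restrict (Ioo (0:ℝ) 1)) :=
    aemeasurable_restrict_of_antitoneOn measurableSet_Ioo (bar_anti μ hF v)
  refine Integrable.of_bound hm.aestronglyMeasurable 1 (Filter.Eventually.of_forall fun t => ?_)
  rw [Real.norm_of_nonneg (bar_nonneg μ v t)]
  exact bar_le_one μ v t

lemma bar_ii (μ : Measure ℝ) [IsProbabilityMeasure μ] (hF : Continuous (cdfOf μ)) (v : ℝ)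
    {a b : ℝ} (ha : 0 ≤ a) (hab : a ≤ b) (hb : b ≤ 1) :
    IntervalIntegrable (kConvBar μ v) volume a b := by
  rw [intervalIntegrable_iff_integrableOn_Icc_of_le hab]
  exact (bar_integrable μ hF v).mono_set (Icc_subset_Icc ha hb)

lemma bar_min_ii (μ : Measure ℝ) [IsProbabilityMeasure μ] (hF : Continuous (cdfOf μ)) (v u : ℝ) :
    IntervalIntegrable (fun t => min (kConvBar μ v t) u) volume 0 1 := by
  rw [intervalIntegrable_iff_integrableOn_Icc_of_le zero_le_one]
  exact Integrable.inf (bar_integrable μ hF v) (integrable_const u)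

lemma bar_integral (μ : Measure ℝ) [IsProbabilityMeasure μ] (hF : Continuous (cdfOf μ)) {v : ℝ}
    (hv : v ∈ Icc (0:ℝ) 1) : (∫ t in (0:ℝ)..1, kConvBar μ v t) = v := by
  rcases bar_cases v with h | h | h
  · rw [bar_zero μ h]; simp [le_antisymm h hv.1]
  · rw [bar_one μ h]; simp [le_antisymm hv.2 h]
  · rw [bar_mid μ h]; exact integral_kConv μ hF h

lemma bar_fixed (μ : Measure ℝ) [IsProbabilityMeasure μ] (hF : Continuous (cdfOf μ)) (v : ℝ)
    {u : ℝ} (hu : u ∈ Icc (0:ℝ) 1) :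
    (∫ t in (0:ℝ)..1, min (kConvBar μ v t) u) = ∫ t in (0:ℝ)..u, kConvBar μ v t :=
  symm_fixed _ (bar_anti μ hF v) (bar_nonneg μ v) (bar_le_one μ v) (bar_symm μ hF v) hu

lemma bar_concave (μ : Measure ℝ) [IsProbabilityMeasure μ] (hF : Continuous (cdfOf μ)) (v : ℝ) :
    ConcaveOn ℝ (Icc (0:ℝ) 1) (fun u => ∫ t in (0:ℝ)..u, kConvBar μ v t) := by
  refine ⟨convex_Icc 0 1, fun x hx y hy a b ha hb hab => ?_⟩
  have hz : a * x + b * y ∈ Icc (0:ℝ) 1 := convex_Icc 0 1 hx hy ha hb hab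
  simp only [← bar_fixed μ hF v hx, ← bar_fixed μ hF v hy, smul_eq_mul]
  rw [← bar_fixed μ hF v hz]
  rw [← intervalIntegral.integral_const_mul, ← intervalIntegral.integral_const_mul,
    ← intervalIntegral.integral_add ((bar_min_ii μ hF v x).const_mul a)
      ((bar_min_ii μ hF v y).const_mul b)]
  refine intervalIntegral.integral_mono_on zero_le_one
    (((bar_min_ii μ hF v x).const_mul a).add ((bar_min_ii μ hF v y).const_mul b))
    (bar_min_ii μ hF v _) fun t _ => ?_
  have e1 := mul_le_mul_of_nonneg_left (min_le_left (kConvBar μ v t) x) ha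
  have e2 := mul_le_mul_of_nonneg_left (min_le_right (kConvBar μ v t) x) ha
  have e3 := mul_le_mul_of_nonneg_left (min_le_left (kConvBar μ v t) y) hb
  have e4 := mul_le_mul_of_nonneg_left (min_le_right (kConvBar μ v t) y) hb
  have e5 : a * kConvBar μ v t + b * kConvBar μ v t = kConvBar μ v t := by
    rw [← add_mul, hab, one_mul]
  refine le_min ?_ ?_ <;> linarith

lemma bar_copula (μ : Measure ℝ) [IsProbabilityMeasure μ] (hF : Continuous (cdfOf μ)) :
    IsCopula (fun v u => ∫ t in (0:ℝ)..u, kConvBar μ v t) := by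
  refine ⟨fun v hv u hu => ⟨?_, ?_⟩, fun v _ => by simp, fun u _ => ?_,
    fun v hv => bar_integral μ hF hv, fun u _ => ?_, ?_⟩
  · exact intervalIntegral.integral_nonneg hu.1 fun t _ => bar_nonneg μ v t
  · have := intervalIntegral.integral_mono_on hu.1 (bar_ii μ hF v le_rfl hu.1 hu.2)
      (intervalIntegrable_const (c := (1:ℝ))) fun t _ => bar_le_one μ v t
    simp at this
    exact this.trans hu.2
  · simp [bar_zero μ le_rfl]
  · simp [bar_one μ le_rfl]
  · intro v₁ v₂ u₁ u₂ _ hv _ hu1 hu hu2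
    have e : ∀ v, (∫ t in (0:ℝ)..u₂, kConvBar μ v t) - ∫ t in (0:ℝ)..u₁, kConvBar μ v t
        = ∫ t in u₁..u₂, kConvBar μ v t := fun v =>
      intervalIntegral.integral_interval_sub_left (bar_ii μ hF v le_rfl (hu1.trans hu) hu2)
        (bar_ii μ hF v le_rfl hu1 (hu.trans hu2))
    have := intervalIntegral.integral_mono_on hu (bar_ii μ hF v₁ hu1 hu hu2)
      (bar_ii μ hF v₂ hu1 hu hu2) fun t _ => bar_mono μ hF t hv
    have e1 := e v₁
    have e2 := e v₂
    show 0 ≤ (∫ t in (0:ℝ)..u₂, kConvBar μ v₂ t) - (∫ t in (0:ℝ)..u₂, kConvBar μ v₁ t)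
      - (∫ t in (0:ℝ)..u₁, kConvBar μ v₂ t) + ∫ t in (0:ℝ)..u₁, kConvBar μ v₁ t
    linarith

/-- Let `μ` be a probability measure on `ℝ` with continuous cdf
`F`, let `G` be the cdf of `μ ∗ μ`, and `k_v(t) = F(G⁻¹(v) − F⁻¹(t))`. Then:
(a) `t ↦ k_v(t)` is decreasing on `(0,1)` for every `v ∈ (0,1)`;
(b) `v ↦ k_v(t)` is increasing on `(0,1)` for every `t ∈ (0,1)`;
(c) `∫₀¹ min(k_v(t), u) dt = ∫₀ᵘ k_v(t) dt` for every `v ∈ (0,1)`, `u ∈ [0,1]`.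
Consequently `C(v,u) := ∫₀ᵘ k_v(t) dt` (extended to the boundary values of `v`)
defines a stochastically increasing bivariate copula that is a fixed point of
the upper product transform: `T(C) = C`. -/
theorem convolution_copula_fixed_point (μ : Measure ℝ) [IsProbabilityMeasure μ]
    (hF : Continuous (cdfOf μ)) :
    (∀ v ∈ Ioo (0:ℝ) 1, AntitoneOn (fun t => kConv μ v t) (Ioo (0:ℝ) 1)) ∧
    (∀ t ∈ Ioo (0:ℝ) 1, MonotoneOn (fun v => kConv μ v t) (Ioo (0:ℝ) 1)) ∧
    (∀ v ∈ Ioo (0:ℝ) 1, ∀ u ∈ Icc (0:ℝ) 1,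
        (∫ t in (0:ℝ)..1, min (kConv μ v t) u) = ∫ t in (0:ℝ)..u, kConv μ v t) ∧
    IsCopula (fun v u => ∫ t in (0:ℝ)..u, kConvBar μ v t) ∧
    (∀ v ∈ Icc (0:ℝ) 1,
        ConcaveOn ℝ (Icc (0:ℝ) 1) (fun u => ∫ t in (0:ℝ)..u, kConvBar μ v t)) ∧
    (∀ v ∈ Icc (0:ℝ) 1, ∀ u ∈ Icc (0:ℝ) 1,
        (∫ t in (0:ℝ)..1, min (kConvBar μ v t) u) = ∫ t in (0:ℝ)..u, kConvBar μ v t) := by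
  refine ⟨fun v _ => kConv_anti μ hF v, fun t _ => kConv_mono μ hF t, fun v hv u hu => ?_,
    bar_copula μ hF, fun v _ => bar_concave μ hF v, fun v _ u hu => bar_fixed μ hF v hu⟩
  have := bar_fixed μ hF v hu
  rwa [bar_mid μ hv] at this

end
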